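/- Let N ≥ 2, μ₁ ∈ ℝ and μ₂ ≥ -(N-2-μ₁)²/4. Let Ω ⊂ ℝ^N be a bounded smooth domain containing the origin and let f ∈ C^γ_loc(Ω̄ \ {0}) for some γ ∈ (0,1) be nonnegative with lim_{r→0⁺} ∫_{Ω \ B_r(0)} f(x) |x|^{τ₊-μ₁} dx = +∞. Then there is no nonnegative classical solution u ∈ C²(Ω \ {0}) of ℒ_{μ₁,μ₂}u = f in Ω \ {0} with u = 0 on ∂Ω. -/

import Mathlib

open MeasureTheory Filter Metric Set Topology

noncomputable section

/-- Euclidean space `ℝ^N`. -/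
abbrev E (N : ℕ) := EuclideanSpace ℝ (Fin N)

/-- The Laplacian, as the sum of second derivatives in the coordinate directions. -/
def lap (N : ℕ) (u : E N → ℝ) (x : E N) : ℝ :=
  ∑ i, fderiv ℝ (fun y => fderiv ℝ u y (EuclideanSpace.single i 1)) x (EuclideanSpace.single i 1)

/-- The CKN operator `ℒ_{μ₁,μ₂} u = -Δu + μ₁|x|⁻² x·∇u + μ₂|x|⁻² u`. -/
def ckn (N : ℕ) (μ₁ μ₂ : ℝ) (u : E N → ℝ) (x : E N) : ℝ :=
  -lap N u x + μ₁ / ‖x‖ ^ 2 * fderiv ℝ u x x + μ₂ / ‖x‖ ^ 2 * u x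

/-- `τ₊(μ₁,μ₂)`. -/
def tauPlus (N : ℕ) (μ₁ μ₂ : ℝ) : ℝ :=
  ((2 - (N : ℝ) + μ₁) + Real.sqrt ((2 - (N : ℝ) + μ₁) ^ 2 + 4 * μ₂)) / 2

/-- `τ₋(μ₁,μ₂)`. -/
def tauMinus (N : ℕ) (μ₁ μ₂ : ℝ) : ℝ :=
  ((2 - (N : ℝ) + μ₁) - Real.sqrt ((2 - (N : ℝ) + μ₁) ^ 2 + 4 * μ₂)) / 2

/-- Surface measure of the unit sphere `𝕊^{N-1}` in `ℝ^N`. -/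
def sphereArea (N : ℕ) : ℝ := N * (volume (ball (0 : E N) 1)).toReal

/-- Local β-Hölder continuity of `f` on a set `s`. -/
def LocHolderOn (N : ℕ) (β : ℝ) (f : E N → ℝ) (s : Set (E N)) : Prop :=
  ∀ x ∈ s, ∃ t ∈ nhdsWithin x s, ∃ C : NNReal, HolderOnWith C β.toNNReal f t

/-!
The formal adjoint of `ℒ_{μ₁,μ₂}` is `ℒ_{-μ₁, μ₂-(N-2)μ₁}`, and `|x|^{τ₊-μ₁}` is a radial solution
of the homogeneous adjoint equation. Multiply it by a cutoff `η_ε(log |x|)` that vanishes near the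
origin, tends to a fixed cutoff as `ε → 0`, and is convex and nondecreasing as a function of
`log |x|` except on a fixed annulus. Since `τ₊ ≥ τ₋`, the adjoint operator sends the resulting test
function `φ_ε` to a nonpositive function off that annulus, and to one bounded uniformly in `ε` on
it. For a nonnegative `u` with `ℒu ≥ 0`, Green's identity therefore bounds `∫ φ_ε ℒu = ∫ u ℒ*φ_ε`
uniformly in `ε`, and Fatou's lemma shows that `|x|^{τ₊-μ₁} ℒu` is integrable near the origin. A
right-hand side `f ≤ ℒu` whose weighted integral diverges at the origin is thus impossible.
-/

section IntegrationByParts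

lemma integrable_mul_of_tsupport_subset {X : Type*} [TopologicalSpace X] [MeasurableSpace X]
    [OpensMeasurableSpace X] {μ : Measure X} [IsFiniteMeasureOnCompacts μ] {U : Set X}
    {φ g : X → ℝ} (hU : IsOpen U) (hφ : Continuous φ) (hc : HasCompactSupport φ)
    (hsub : tsupport φ ⊆ U) (hg : ContinuousOn g U) : Integrable (fun x => φ x * g x) μ := by
  have hcont : Continuous (fun x => φ x * g x) :=
    (hφ.continuousOn.mul hg).continuous_of_tsupport_subset hU
      ((tsupport_mul_subset_left (f := φ) (g := g)).trans hsub)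
  exact hcont.integrable_of_hasCompactSupport hc.mul_right

lemma integral_mul_fderiv_eq_neg_of_tsupport_subset {F : Type*} [NormedAddCommGroup F]
    [NormedSpace ℝ F] [FiniteDimensional ℝ F] [MeasurableSpace F] [BorelSpace F] {μ : Measure F}
    [μ.IsAddHaarMeasure] {U : Set F} {φ g : F → ℝ} (hU : IsOpen U) (hφ : ContDiff ℝ 1 φ)
    (hc : HasCompactSupport φ) (hsub : tsupport φ ⊆ U)
    (hg : ContDiffOn ℝ 1 g U) (v : F) :
    ∫ x, φ x * fderiv ℝ g x v ∂μ = -∫ x, fderiv ℝ φ x v * g x ∂μ := by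
  refine integral_mul_fderiv_eq_neg_fderiv_mul_of_integrable ?_ ?_ ?_
    (fun x _ => hφ.differentiable one_ne_zero x)
    (fun x hx => (hg.contDiffAt (hU.mem_nhds (hsub hx))).differentiableAt one_ne_zero)
  · exact integrable_mul_of_tsupport_subset hU
      ((hφ.continuous_fderiv one_ne_zero).clm_apply continuous_const) (hc.fderiv_apply ℝ v)
      ((tsupport_fderiv_apply_subset ℝ v).trans hsub) hg.continuousOn
  · exact integrable_mul_of_tsupport_subset hU hφ.continuous hc hsub
      ((hg.continuousOn_fderiv_of_isOpen hU le_rfl).clm_apply continuousOn_const)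
  · exact integrable_mul_of_tsupport_subset hU hφ.continuous hc hsub hg.continuousOn

variable {N : ℕ} {U : Set (E N)} {φ u : E N → ℝ}

lemma integral_mul_lap_comm (hU : IsOpen U) (hφ : ContDiff ℝ 2 φ) (hc : HasCompactSupport φ)
    (hsub : tsupport φ ⊆ U) (hu : ContDiffOn ℝ 2 u U) :
    ∫ x, φ x * lap N u x = ∫ x, lap N φ x * u x := by
  have hdφ (v : E N) : ContDiff ℝ 1 (fun y => fderiv ℝ φ y v) :=
    (hφ.fderiv_right (by norm_num)).clm_apply contDiff_const
  have hdu (v : E N) : ContDiffOn ℝ 1 (fun y => fderiv ℝ u y v) U :=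
    (hu.fderiv_of_isOpen hU (by norm_num)).clm_apply contDiffOn_const
  have hdsub (v : E N) : tsupport (fun y => fderiv ℝ φ y v) ⊆ U :=
    (tsupport_fderiv_apply_subset ℝ v).trans hsub
  simp only [lap, Finset.mul_sum, Finset.sum_mul]
  rw [integral_finsetSum, integral_finsetSum]
  · refine Finset.sum_congr rfl fun i _ => ?_
    rw [integral_mul_fderiv_eq_neg_of_tsupport_subset hU (hφ.of_le one_le_two) hc hsub (hdu _),
      integral_mul_fderiv_eq_neg_of_tsupport_subset hU (hdφ _) (hc.fderiv_apply ℝ _) (hdsub _)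
        (hu.of_le one_le_two), neg_neg]
  · exact fun i _ => integrable_mul_of_tsupport_subset hU
      (((hdφ _).continuous_fderiv one_ne_zero).clm_apply continuous_const)
      ((hc.fderiv_apply ℝ _).fderiv_apply ℝ _)
      ((tsupport_fderiv_apply_subset ℝ _).trans (hdsub _)) hu.continuousOn
  · exact fun i _ => integrable_mul_of_tsupport_subset hU hφ.continuous hc hsub
      (((hdu _).continuousOn_fderiv_of_isOpen hU le_rfl).clm_apply continuousOn_const)

lemma fderiv_apply_eq_sum (u : E N → ℝ) (x v : E N) :
    fderiv ℝ u x v = ∑ i, v i * fderiv ℝ u x (EuclideanSpace.single i 1) := by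
  conv_lhs => rw [← (EuclideanSpace.basisFun (Fin N) ℝ).sum_repr v]
  simp

lemma integral_mul_fderiv_self (hU : IsOpen U) (hφ : ContDiff ℝ 1 φ) (hc : HasCompactSupport φ)
    (hsub : tsupport φ ⊆ U) (hu : ContDiffOn ℝ 1 u U) :
    ∫ x, φ x * fderiv ℝ u x x = -∫ x, (fderiv ℝ φ x x + N * φ x) * u x := by
  have hψ (i : Fin N) : ContDiff ℝ 1 (fun x : E N => φ x * x i) := by fun_prop
  have hψc (i : Fin N) : HasCompactSupport (fun x : E N => φ x * x i) := hc.mul_right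
  have hψsub (i : Fin N) : tsupport (fun x : E N => φ x * x i) ⊆ U :=
    (tsupport_mul_subset_left (f := φ) (g := fun x : E N => x i)).trans hsub
  have hdψ (i : Fin N) (x : E N) :
      fderiv ℝ (fun y : E N => φ y * y i) x (EuclideanSpace.single i 1) =
        x i * fderiv ℝ φ x (EuclideanSpace.single i 1) + φ x := by
    have hcoord : HasFDerivAt (fun y : E N => y i) (EuclideanSpace.proj i : E N →L[ℝ] ℝ) x :=
      (EuclideanSpace.proj i : E N →L[ℝ] ℝ).hasFDerivAt
    rw [((hφ.differentiable one_ne_zero x).hasFDerivAt.fun_mul hcoord).fderiv]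
    simp [add_comm]
  calc ∫ x, φ x * fderiv ℝ u x x
      = ∑ i, ∫ x, φ x * x i * fderiv ℝ u x (EuclideanSpace.single i 1) := by
        rw [← integral_finsetSum]
        · congr with x
          rw [fderiv_apply_eq_sum u x x, Finset.mul_sum]
          simp only [mul_assoc]
        · exact fun i _ => integrable_mul_of_tsupport_subset hU (hψ i).continuous (hψc i) (hψsub i)
            ((hu.continuousOn_fderiv_of_isOpen hU le_rfl).clm_apply continuousOn_const)
    _ = -∑ i, ∫ x, fderiv ℝ (fun y : E N => φ y * y i) x (EuclideanSpace.single i 1) * u x := by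
        rw [← Finset.sum_neg_distrib]
        exact Finset.sum_congr rfl fun i _ =>
          integral_mul_fderiv_eq_neg_of_tsupport_subset hU (hψ i) (hψc i) (hψsub i) hu _
    _ = -∫ x, (fderiv ℝ φ x x + N * φ x) * u x := by
        rw [← integral_finsetSum]
        · congr 2 with x
          rw [fderiv_apply_eq_sum φ x x, ← Finset.sum_mul]
          simp only [hdψ, Finset.sum_add_distrib, Finset.sum_const, Finset.card_univ,
            Fintype.card_fin, nsmul_eq_mul]
        · exact fun i _ => integrable_mul_of_tsupport_subset hU
            (((hψ i).continuous_fderiv one_ne_zero).clm_apply continuous_const)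
            ((hψc i).fderiv_apply ℝ _) ((tsupport_fderiv_apply_subset ℝ _).trans (hψsub i))
            hu.continuousOn

end IntegrationByParts

section GreenIdentity

variable {N : ℕ} {μ₁ μ₂ : ℝ} {U : Set (E N)} {φ u : E N → ℝ}

lemma continuousOn_lap (hU : IsOpen U) (hu : ContDiffOn ℝ 2 u U) :
    ContinuousOn (lap N u) U := by
  have hdu (v : E N) : ContDiffOn ℝ 1 (fun y => fderiv ℝ u y v) U :=
    (hu.fderiv_of_isOpen hU (by norm_num)).clm_apply contDiffOn_const
  exact continuousOn_finsetSum _ fun i _ =>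
    ((hdu _).continuousOn_fderiv_of_isOpen hU le_rfl).clm_apply continuousOn_const

lemma continuousOn_ckn (hU : IsOpen U) (h0 : (0 : E N) ∉ U) (hu : ContDiffOn ℝ 2 u U) :
    ContinuousOn (ckn N μ₁ μ₂ u) U := by
  have hne (x : E N) (hx : x ∈ U) : ‖x‖ ^ 2 ≠ 0 :=
    pow_ne_zero 2 (norm_ne_zero_iff.2 (ne_of_mem_of_not_mem hx h0))
  have hcoeff (μ : ℝ) : ContinuousOn (fun x : E N => μ / ‖x‖ ^ 2) U :=
    continuousOn_const.div (by fun_prop) hne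
  have hdrift : ContinuousOn (fun x => fderiv ℝ u x x) U :=
    (hu.continuousOn_fderiv_of_isOpen hU one_le_two).clm_apply continuousOn_id
  exact ((continuousOn_lap hU hu).neg.add ((hcoeff μ₁).mul hdrift)).add
    ((hcoeff μ₂).mul hu.continuousOn)

lemma tsupport_lap_subset : tsupport (lap N φ) ⊆ tsupport φ := by
  refine closure_minimal (fun x hx => ?_) (isClosed_tsupport φ)
  contrapose! hx
  have hxi (v : E N) : fderiv ℝ (fun y => fderiv ℝ φ y v) x = 0 :=
    fderiv_of_notMem_tsupport ℝ fun h => hx (tsupport_fderiv_apply_subset ℝ v h)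
  simp [lap, hxi]

lemma tsupport_fderiv_self_add_mul_subset (c : ℝ) :
    tsupport (fun x => fderiv ℝ φ x x + c * φ x) ⊆ tsupport φ := by
  refine closure_minimal (fun x hx => ?_) (isClosed_tsupport φ)
  contrapose! hx
  simp [fderiv_of_notMem_tsupport ℝ hx, image_eq_zero_of_notMem_tsupport hx]

lemma tsupport_ckn_subset : tsupport (ckn N μ₁ μ₂ φ) ⊆ tsupport φ := by
  refine closure_minimal (fun x hx => ?_) (isClosed_tsupport φ)
  contrapose! hx
  have hlap : lap N φ x = 0 :=
    image_eq_zero_of_notMem_tsupport fun h => hx (tsupport_lap_subset h)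
  simp [ckn, hlap, fderiv_of_notMem_tsupport ℝ hx, image_eq_zero_of_notMem_tsupport hx]

lemma fderiv_div_norm_sq_apply_self {x : E N} (hφ : DifferentiableAt ℝ φ x) :
    fderiv ℝ (fun y => φ y / ‖y‖ ^ 2) x x = (fderiv ℝ φ x x - 2 * φ x) / ‖x‖ ^ 2 := by
  rcases eq_or_ne x 0 with rfl | hx
  · simp
  have hn : ‖x‖ ^ 2 ≠ 0 := pow_ne_zero 2 (norm_ne_zero_iff.2 hx)
  have hinv : HasFDerivAt (fun y : E N => (‖y‖ ^ 2)⁻¹) _ x :=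
    (hasDerivAt_inv hn).comp_hasFDerivAt x (hasStrictFDerivAt_norm_sq x).hasFDerivAt
  simp only [div_eq_mul_inv]
  rw [(hφ.hasFDerivAt.fun_mul hinv).fderiv]
  simp
  field_simp
  ring

lemma contDiff_div_norm_sq (h0 : 0 ∉ tsupport φ) (hφ : ContDiff ℝ 2 φ) :
    ContDiff ℝ 2 (fun x => φ x / ‖x‖ ^ 2) := by
  refine contDiff_iff_contDiffAt.2 fun x => ?_
  rcases eq_or_ne x 0 with rfl | hx
  · have hzero : (fun x => φ x / ‖x‖ ^ 2) =ᶠ[𝓝 0] fun _ => 0 := by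
      filter_upwards [notMem_tsupport_iff_eventuallyEq.1 h0] with y hy
      simp [hy]
    exact contDiffAt_const.congr_of_eventuallyEq hzero
  · exact hφ.contDiffAt.div (contDiff_norm_sq ℝ).contDiffAt
      (pow_ne_zero 2 (norm_ne_zero_iff.2 hx))

lemma tsupport_div_norm_sq_subset : tsupport (fun x => φ x / ‖x‖ ^ 2) ⊆ tsupport φ := by
  simpa only [div_eq_mul_inv] using
    tsupport_mul_subset_left (f := φ) (g := fun x : E N => (‖x‖ ^ 2)⁻¹)

lemma integrable_lap_mul (hU : IsOpen U) (hφ : ContDiff ℝ 2 φ) (hc : HasCompactSupport φ)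
    (hsub : tsupport φ ⊆ U) (hu : ContinuousOn u U) : Integrable (fun x => lap N φ x * u x) :=
  integrable_mul_of_tsupport_subset hU
    (continuousOn_univ.1 (continuousOn_lap isOpen_univ hφ.contDiffOn))
    (hc.of_isClosed_subset (isClosed_tsupport _) tsupport_lap_subset)
    (tsupport_lap_subset.trans hsub) hu

lemma integrable_fderiv_self_add_mul (c : ℝ) (hU : IsOpen U) (hφ : ContDiff ℝ 1 φ)
    (hc : HasCompactSupport φ) (hsub : tsupport φ ⊆ U) (hu : ContinuousOn u U) :
    Integrable (fun x => (fderiv ℝ φ x x + c * φ x) * u x) :=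
  have hφsub := tsupport_fderiv_self_add_mul_subset (φ := φ) c
  integrable_mul_of_tsupport_subset hU
    (((hφ.continuous_fderiv one_ne_zero).clm_apply continuous_id).add
      (continuous_const.mul hφ.continuous))
    (hc.of_isClosed_subset (isClosed_tsupport _) hφsub) (hφsub.trans hsub) hu

lemma integrable_ckn_mul (hU : IsOpen U) (h0 : (0 : E N) ∉ U) (hφ : ContDiff ℝ 2 φ)
    (hc : HasCompactSupport φ) (hsub : tsupport φ ⊆ U) (hu : ContinuousOn u U) :
    Integrable (fun x => ckn N μ₁ μ₂ φ x * u x) :=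
  integrable_mul_of_tsupport_subset hU
    ((continuousOn_ckn hU h0 hφ.contDiffOn).continuous_of_tsupport_subset hU
      (tsupport_ckn_subset.trans hsub))
    (hc.of_isClosed_subset (isClosed_tsupport _) tsupport_ckn_subset)
    (tsupport_ckn_subset.trans hsub) hu

lemma integral_neg_add_mul_add_mul {X : Type*} [MeasurableSpace X] {μ : Measure X}
    {F G H : X → ℝ} (hF : Integrable F μ) (hG : Integrable G μ) (hH : Integrable H μ) (a b : ℝ) :
    ∫ x, (-F x + a * G x + b * H x) ∂μ =
      -(∫ x, F x ∂μ) + a * (∫ x, G x ∂μ) + b * ∫ x, H x ∂μ := by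
  have hFG : Integrable (fun x => -F x + a * G x) μ := hF.neg.add (hG.const_mul a)
  rw [integral_add hFG (hH.const_mul b), integral_add hF.fun_neg (hG.const_mul a), integral_neg,
    integral_const_mul, integral_const_mul]

lemma integral_mul_ckn_eq_integral_ckn_mul (hU : IsOpen U) (h0 : (0 : E N) ∉ U)
    (hφ : ContDiff ℝ 2 φ) (hc : HasCompactSupport φ) (hsub : tsupport φ ⊆ U)
    (hu : ContDiffOn ℝ 2 u U) :
    ∫ x, φ x * ckn N μ₁ μ₂ u x = ∫ x, ckn N (-μ₁) (μ₂ - (N - 2) * μ₁) φ x * u x := by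
  set ψ : E N → ℝ := fun x => φ x / ‖x‖ ^ 2 with hψ_def
  have hψ : ContDiff ℝ 2 ψ := contDiff_div_norm_sq (fun h => h0 (hsub h)) hφ
  have hψc : HasCompactSupport ψ :=
    hc.of_isClosed_subset (isClosed_tsupport ψ) tsupport_div_norm_sq_subset
  have hψsub : tsupport ψ ⊆ U := tsupport_div_norm_sq_subset.trans hsub
  have hpot : Integrable (fun x => ψ x * u x) :=
    integrable_mul_of_tsupport_subset hU hψ.continuous hψc hψsub hu.continuousOn
  calc ∫ x, φ x * ckn N μ₁ μ₂ u x
      = ∫ x, (-(φ x * lap N u x) + μ₁ * (ψ x * fderiv ℝ u x x) + μ₂ * (ψ x * u x)) := by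
        congr with x
        rw [ckn]
        ring
    _ = -(∫ x, φ x * lap N u x) + μ₁ * (∫ x, ψ x * fderiv ℝ u x x) + μ₂ * ∫ x, ψ x * u x :=
        integral_neg_add_mul_add_mul
          (integrable_mul_of_tsupport_subset hU hφ.continuous hc hsub (continuousOn_lap hU hu))
          (integrable_mul_of_tsupport_subset hU hψ.continuous hψc hψsub
            ((hu.continuousOn_fderiv_of_isOpen hU one_le_two).clm_apply continuousOn_id))
          hpot μ₁ μ₂
    _ = -(∫ x, lap N φ x * u x) + -μ₁ * (∫ x, (fderiv ℝ ψ x x + N * ψ x) * u x) +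
          μ₂ * ∫ x, ψ x * u x := by
        rw [integral_mul_lap_comm hU hφ hc hsub hu, integral_mul_fderiv_self hU
          (hψ.of_le one_le_two) hψc hψsub (hu.of_le one_le_two), neg_mul, mul_neg]
    _ = ∫ x, (-(lap N φ x * u x) + -μ₁ * ((fderiv ℝ ψ x x + N * ψ x) * u x) +
          μ₂ * (ψ x * u x)) :=
        (integral_neg_add_mul_add_mul (integrable_lap_mul hU hφ hc hsub hu.continuousOn)
          (integrable_fderiv_self_add_mul N hU (hψ.of_le one_le_two) hψc hψsub hu.continuousOn)
          hpot (-μ₁) μ₂).symm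
    _ = ∫ x, ckn N (-μ₁) (μ₂ - (N - 2) * μ₁) φ x * u x := by
        congr with x
        rw [ckn, hψ_def, fderiv_div_norm_sq_apply_self (hφ.differentiable two_ne_zero x)]
        ring

end GreenIdentity

section Radial

lemma hasFDerivAt_log_norm {F : Type*} [NormedAddCommGroup F] [InnerProductSpace ℝ F] {x : F}
    (hx : x ≠ 0) :
    HasFDerivAt (fun y : F => Real.log ‖y‖) ((‖x‖ ^ 2)⁻¹ • innerSL ℝ x) x := by
  have hlog : (fun y : F => Real.log ‖y‖) = fun y => 2⁻¹ * Real.log (‖y‖ ^ 2) := by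
    ext y
    rw [Real.log_pow]
    push_cast
    ring
  rw [hlog]
  refine (((hasStrictFDerivAt_norm_sq x).hasFDerivAt.log (by positivity)).const_mul _).congr_fderiv
    ?_
  ext v
  simp
  ring

lemma fderiv_comp_log_norm {F : Type*} [NormedAddCommGroup F] [InnerProductSpace ℝ F] {P : ℝ → ℝ}
    {x : F} (hx : x ≠ 0) (hP : DifferentiableAt ℝ P (Real.log ‖x‖)) (v : F) :
    fderiv ℝ (fun y : F => P (Real.log ‖y‖)) x v =
      deriv P (Real.log ‖x‖) / ‖x‖ ^ 2 * inner ℝ x v := by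
  have h := (hP.hasDerivAt.comp_hasFDerivAt x (hasFDerivAt_log_norm hx)).fderiv
  rw [Function.comp_def] at h
  rw [h]
  simp
  ring

section Support

variable {F : Type*} [NormedAddCommGroup F] {P : ℝ → ℝ} {a b : ℝ}

-- The value at the origin is `P 0`, because `Real.log 0 = 0`.
lemma tsupport_comp_log_norm_subset (hP0 : P 0 = 0) (hP : ∀ t ∉ Icc a b, P t = 0) :
    tsupport (fun x : F => P (Real.log ‖x‖)) ⊆ norm ⁻¹' Icc (Real.exp a) (Real.exp b) := by
  refine closure_minimal (fun x hx => ?_) (isClosed_Icc.preimage continuous_norm)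
  have hx0 : 0 < ‖x‖ := norm_pos_iff.2 (by rintro rfl; simp [hP0] at hx)
  by_contra hmem
  refine hx (hP _ fun h => hmem ?_)
  exact ⟨(Real.le_log_iff_exp_le hx0).1 h.1, (Real.log_le_iff_le_exp hx0).1 h.2⟩

lemma hasCompactSupport_comp_log_norm [ProperSpace F] (hP0 : P 0 = 0)
    (hP : ∀ t ∉ Icc a b, P t = 0) : HasCompactSupport (fun x : F => P (Real.log ‖x‖)) := by
  refine (isCompact_closedBall (0 : F) (Real.exp b)).of_isClosed_subset (isClosed_tsupport _)
    fun x hx => ?_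
  exact mem_closedBall_zero_iff.2 (tsupport_comp_log_norm_subset hP0 hP hx).2

lemma contDiff_comp_log_norm [InnerProductSpace ℝ F] {n : ℕ} (hPn : ContDiff ℝ n P)
    (hP0 : P 0 = 0) (hP : ∀ t ∉ Icc a b, P t = 0) :
    ContDiff ℝ n (fun x : F => P (Real.log ‖x‖)) := by
  refine contDiff_iff_contDiffAt.2 fun x => ?_
  rcases eq_or_ne x 0 with rfl | hx
  · have h0 : (0 : F) ∉ tsupport (fun x : F => P (Real.log ‖x‖)) := fun h =>
      (Real.exp_pos a).not_ge (by simpa using (tsupport_comp_log_norm_subset hP0 hP h).1)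
    exact contDiffAt_const.congr_of_eventuallyEq (notMem_tsupport_iff_eventuallyEq.1 h0)
  · exact hPn.contDiffAt.comp x ((contDiffAt_norm ℝ hx).log (norm_ne_zero_iff.2 hx))

end Support

variable {N : ℕ} {P : ℝ → ℝ} {x : E N}

lemma fderiv_fderiv_comp_log_norm_single (hx : x ≠ 0) (hP : ContDiff ℝ 2 P) (i : Fin N) :
    fderiv ℝ (fun y => fderiv ℝ (fun z : E N => P (Real.log ‖z‖)) y (EuclideanSpace.single i 1)) x
        (EuclideanSpace.single i 1) =
      (deriv (deriv P) (Real.log ‖x‖) - 2 * deriv P (Real.log ‖x‖)) / ‖x‖ ^ 4 * x i ^ 2 +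
        deriv P (Real.log ‖x‖) / ‖x‖ ^ 2 := by
  have hn : ‖x‖ ^ 2 ≠ 0 := pow_ne_zero 2 (norm_ne_zero_iff.2 hx)
  have hfst : (fun y => fderiv ℝ (fun z : E N => P (Real.log ‖z‖)) y (EuclideanSpace.single i 1))
      =ᶠ[𝓝 x] fun y => deriv P (Real.log ‖y‖) / ‖y‖ ^ 2 * y i := by
    filter_upwards [isOpen_ne.mem_nhds hx] with y hy
    rw [fderiv_comp_log_norm hy (hP.differentiable two_ne_zero _)]
    simp [EuclideanSpace.inner_single_right]
  have hP' : HasDerivAt (deriv P) (deriv (deriv P) (Real.log ‖x‖)) (Real.log ‖x‖) :=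
    (hP.deriv'.differentiable one_ne_zero _).hasDerivAt
  have hinv := (hasDerivAt_inv hn).comp_hasFDerivAt x (hasStrictFDerivAt_norm_sq x).hasFDerivAt
  have hcoord : HasFDerivAt (fun y : E N => y i) (EuclideanSpace.proj i : E N →L[ℝ] ℝ) x :=
    (EuclideanSpace.proj i : E N →L[ℝ] ℝ).hasFDerivAt
  have hsnd := (((hP'.comp_hasFDerivAt x (hasFDerivAt_log_norm hx)).mul hinv).mul hcoord).fderiv
  rw [hfst.fderiv_eq]
  refine (congrArg (fun A : E N →L[ℝ] ℝ => A (EuclideanSpace.single i 1)) hsnd).trans ?_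
  simp [EuclideanSpace.inner_single_right]
  field_simp
  ring

lemma lap_comp_log_norm (hx : x ≠ 0) (hP : ContDiff ℝ 2 P) :
    lap N (fun y => P (Real.log ‖y‖)) x =
      (deriv (deriv P) (Real.log ‖x‖) + (N - 2) * deriv P (Real.log ‖x‖)) / ‖x‖ ^ 2 := by
  have hn : ‖x‖ ≠ 0 := norm_ne_zero_iff.2 hx
  simp only [lap, fderiv_fderiv_comp_log_norm_single hx hP, Finset.sum_add_distrib,
    ← Finset.mul_sum, ← EuclideanSpace.real_norm_sq_eq, Finset.sum_const, Finset.card_univ,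
    Fintype.card_fin, nsmul_eq_mul]
  field_simp
  ring

lemma ckn_comp_log_norm (μ₁ μ₂ : ℝ) (hx : x ≠ 0) (hP : ContDiff ℝ 2 P) :
    ckn N μ₁ μ₂ (fun y => P (Real.log ‖y‖)) x =
      -(deriv (deriv P) (Real.log ‖x‖) + (N - 2 - μ₁) * deriv P (Real.log ‖x‖)
        - μ₂ * P (Real.log ‖x‖)) / ‖x‖ ^ 2 := by
  have hn : ‖x‖ ≠ 0 := norm_ne_zero_iff.2 hx
  rw [ckn, lap_comp_log_norm hx hP, fderiv_comp_log_norm hx (hP.differentiable two_ne_zero _),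
    real_inner_self_eq_norm_sq]
  field_simp
  ring

lemma tauPlus_sq_eq {μ₁ μ₂ : ℝ} (hμ : 0 ≤ (2 - N + μ₁) ^ 2 + 4 * μ₂) :
    tauPlus N μ₁ μ₂ ^ 2 = (2 - N + μ₁) * tauPlus N μ₁ μ₂ + μ₂ := by
  rw [tauPlus]
  linear_combination Real.sq_sqrt hμ / 4

lemma tauPlus_add_tauMinus (N : ℕ) (μ₁ μ₂ : ℝ) :
    tauPlus N μ₁ μ₂ + tauMinus N μ₁ μ₂ = 2 - N + μ₁ := by
  rw [tauPlus, tauMinus]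
  ring

lemma tauMinus_le_tauPlus (N : ℕ) (μ₁ μ₂ : ℝ) : tauMinus N μ₁ μ₂ ≤ tauPlus N μ₁ μ₂ := by
  have := Real.sqrt_nonneg ((2 - (N : ℝ) + μ₁) ^ 2 + 4 * μ₂)
  rw [tauPlus, tauMinus]
  linarith

lemma tauPlus_adjoint (N : ℕ) (μ₁ μ₂ : ℝ) :
    tauPlus N (-μ₁) (μ₂ - (N - 2) * μ₁) = tauPlus N μ₁ μ₂ - μ₁ := by
  have hdisc : (2 - (N : ℝ) + -μ₁) ^ 2 + 4 * (μ₂ - (N - 2) * μ₁) =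
      (2 - (N : ℝ) + μ₁) ^ 2 + 4 * μ₂ := by ring
  rw [tauPlus, tauPlus, hdisc]
  ring

lemma ckn_exp_mul_comp_log_norm {μ₁ μ₂ : ℝ} {η : ℝ → ℝ} (hμ : 0 ≤ (2 - N + μ₁) ^ 2 + 4 * μ₂)
    (hη : ContDiff ℝ 2 η) (hx : x ≠ 0) :
    ckn N μ₁ μ₂ (fun y => Real.exp (tauPlus N μ₁ μ₂ * Real.log ‖y‖) * η (Real.log ‖y‖)) x =
      Real.exp (tauPlus N μ₁ μ₂ * Real.log ‖x‖) / ‖x‖ ^ 2 *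
        -(deriv (deriv η) (Real.log ‖x‖) +
          (tauPlus N μ₁ μ₂ - tauMinus N μ₁ μ₂) * deriv η (Real.log ‖x‖)) := by
  set τ := tauPlus N μ₁ μ₂
  have hexp (t : ℝ) : HasDerivAt (fun t => Real.exp (τ * t)) (Real.exp (τ * t) * τ) t := by
    simpa using ((hasDerivAt_id t).const_mul τ).exp
  have hη₁ (t : ℝ) : HasDerivAt η (deriv η t) t := (hη.differentiable two_ne_zero t).hasDerivAt
  have hη₂ (t : ℝ) : HasDerivAt (deriv η) (deriv (deriv η) t) t :=
    (hη.deriv'.differentiable one_ne_zero t).hasDerivAt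
  have hP₁ : deriv (fun t => Real.exp (τ * t) * η t) =
      fun t => Real.exp (τ * t) * (τ * η t + deriv η t) := by
    ext t
    rw [((hexp t).fun_mul (hη₁ t)).deriv]
    ring
  have hP₂ (t : ℝ) : deriv (deriv fun t => Real.exp (τ * t) * η t) t =
      Real.exp (τ * t) * (τ ^ 2 * η t + 2 * τ * deriv η t + deriv (deriv η) t) := by
    rw [hP₁, ((hexp t).fun_mul (((hη₁ t).const_mul τ).fun_add (hη₂ t))).deriv]
    ring
  have hP : ContDiff ℝ 2 (fun t => Real.exp (τ * t) * η t) :=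
    (Real.contDiff_exp.comp (contDiff_const.mul contDiff_id)).mul hη
  rw [ckn_comp_log_norm (P := fun t => Real.exp (τ * t) * η t) μ₁ μ₂ hx hP, hP₂, hP₁]
  have hminus : tauMinus N μ₁ μ₂ = 2 - N + μ₁ - τ := by
    rw [← tauPlus_add_tauMinus N μ₁ μ₂]
    ring
  rw [hminus]
  linear_combination
    (-(Real.exp (τ * Real.log ‖x‖) * η (Real.log ‖x‖)) / ‖x‖ ^ 2) * tauPlus_sq_eq hμ

end Radial

section LogCutoff

lemma hasDerivAt_max_zero_pow (n : ℕ) (y : ℝ) :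
    HasDerivAt (fun y : ℝ => max y 0 ^ (n + 2)) ((n + 2 : ℝ) * max y 0 ^ (n + 1)) y := by
  refine hasDerivAt_of_hasDerivAt_of_ne' (x := 0)
    (g := fun y : ℝ => (n + 2 : ℝ) * max y 0 ^ (n + 1)) (fun z hz => ?_) (by fun_prop)
    (by fun_prop) y
  rcases hz.lt_or_gt with hz | hz
  · have hzero : (fun y : ℝ => max y 0 ^ (n + 2)) =ᶠ[𝓝 z] fun _ => 0 := by
      filter_upwards [Iio_mem_nhds hz] with w hw
      simp [max_eq_right (mem_Iio.1 hw).le]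
    simpa [max_eq_right hz.le] using (hasDerivAt_const z (0 : ℝ)).congr_of_eventuallyEq hzero
  · have hpow : (fun y : ℝ => max y 0 ^ (n + 2)) =ᶠ[𝓝 z] fun y => y ^ (n + 2) := by
      filter_upwards [Ioi_mem_nhds hz] with w hw
      rw [max_eq_left (mem_Ioi.1 hw).le]
    simpa [max_eq_left hz.le] using (hasDerivAt_pow (n + 2) z).congr_of_eventuallyEq hpow

lemma hasDerivAt_max_one_add_mul_zero_pow (n : ℕ) (ε t : ℝ) :
    HasDerivAt (fun s : ℝ => max (1 + ε * s) 0 ^ (n + 2))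
      ((n + 2 : ℝ) * max (1 + ε * t) 0 ^ (n + 1) * ε) t := by
  have hlin : HasDerivAt (fun s => 1 + ε * s) ε t := by
    simpa using ((hasDerivAt_id t).const_mul ε).const_add 1
  exact (hasDerivAt_max_zero_pow n _).comp t hlin

lemma contDiff_max_zero_pow (n : ℕ) : ContDiff ℝ n (fun y : ℝ => max y 0 ^ (n + 1)) := by
  induction n with
  | zero => exact contDiff_zero.2 (by fun_prop)
  | succ n ih =>
    have hderiv : deriv (fun y : ℝ => max y 0 ^ (n + 2)) =
        fun y => (n + 2 : ℝ) * max y 0 ^ (n + 1) :=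
      funext fun y => (hasDerivAt_max_zero_pow n y).deriv
    rw [Nat.cast_succ]
    refine contDiff_succ_iff_deriv.2
      ⟨fun y => (hasDerivAt_max_zero_pow n y).differentiableAt, by simp, ?_⟩
    rw [hderiv]
    exact contDiff_const.mul ih

lemma contDiff_uncurry_deriv {E₁ F : Type*} [NormedAddCommGroup E₁] [NormedSpace ℝ E₁]
    [NormedAddCommGroup F] [NormedSpace ℝ F] {n : ℕ} {η : E₁ → ℝ → F}
    (hη : ContDiff ℝ (n + 1) (Function.uncurry η)) :
    ContDiff ℝ n (Function.uncurry fun a => deriv (η a)) := by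
  have hpair : ContDiff ℝ (n + 1)
      (Function.uncurry fun (p : E₁ × ℝ) (t : ℝ) => η p.1 t) :=
    hη.comp ((contDiff_fst.comp contDiff_fst).prodMk contDiff_snd)
  exact hpair.fderiv_apply contDiff_snd contDiff_const le_rfl

/-- The cutoff `η_ε` in the variable `t = log |x|`: it vanishes for `t ≥ T` and, when `ε > 0`,
for `t ≤ -1/ε`, and it tends to a fixed cutoff equal to `1` for `t ≤ T - 1` as `ε → 0`. Below
`T - 1` it is the cube of the positive part of `1 + εt`, the lowest power that is `C²` there,
and so is convex and nondecreasing. -/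
def logCutoff (T ε t : ℝ) : ℝ := Real.smoothTransition (T - t) * max (1 + ε * t) 0 ^ 3

variable {T ε t : ℝ}

lemma logCutoff_nonneg (T ε t : ℝ) : 0 ≤ logCutoff T ε t :=
  mul_nonneg (Real.smoothTransition.nonneg _) (pow_nonneg (le_max_right _ _) 3)

lemma logCutoff_of_ge (ht : T ≤ t) : logCutoff T ε t = 0 := by
  rw [logCutoff, Real.smoothTransition.zero_of_nonpos (sub_nonpos.2 ht), zero_mul]

lemma logCutoff_of_le (ht : t ≤ T - 1) : logCutoff T ε t = max (1 + ε * t) 0 ^ 3 := by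
  rw [logCutoff, Real.smoothTransition.one_of_one_le (by linarith), one_mul]

lemma logCutoff_of_notMem_Icc (hε : 0 < ε) (ht : t ∉ Icc (-1 / ε) T) : logCutoff T ε t = 0 := by
  rcases le_total T t with h | h
  · exact logCutoff_of_ge h
  · have hlt : t < -1 / ε := not_le.1 fun h' => ht ⟨h', h⟩
    rw [lt_div_iff₀ hε] at hlt
    rw [logCutoff, max_eq_right (by linarith)]
    simp

lemma contDiff_uncurry_logCutoff (T : ℝ) : ContDiff ℝ 2 (Function.uncurry (logCutoff T)) :=
  (Real.smoothTransition.contDiff.comp (contDiff_const.sub contDiff_snd)).mul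
    ((contDiff_max_zero_pow 2).comp (contDiff_const.add (contDiff_fst.mul contDiff_snd)))

lemma contDiff_logCutoff (T ε : ℝ) : ContDiff ℝ 2 (logCutoff T ε) :=
  (contDiff_uncurry_logCutoff T).comp (contDiff_const.prodMk contDiff_id)

lemma deriv_logCutoff_of_lt (ht : t < T - 1) :
    deriv (logCutoff T ε) t = 3 * ε * max (1 + ε * t) 0 ^ 2 := by
  have hcube : logCutoff T ε =ᶠ[𝓝 t] fun s => max (1 + ε * s) 0 ^ 3 := by
    filter_upwards [Iio_mem_nhds ht] with s hs using logCutoff_of_le (mem_Iio.1 hs).le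
  rw [hcube.deriv_eq, (hasDerivAt_max_one_add_mul_zero_pow 1 ε t).deriv]
  norm_num
  ring

lemma deriv_deriv_logCutoff_of_lt (ht : t < T - 1) :
    deriv (deriv (logCutoff T ε)) t = 6 * ε ^ 2 * max (1 + ε * t) 0 := by
  have hsquare : deriv (logCutoff T ε) =ᶠ[𝓝 t] fun s => 3 * ε * max (1 + ε * s) 0 ^ 2 := by
    filter_upwards [Iio_mem_nhds ht] with s hs using deriv_logCutoff_of_lt hs
  rw [hsquare.deriv_eq, ((hasDerivAt_max_one_add_mul_zero_pow 0 ε t).const_mul (3 * ε)).deriv]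
  norm_num
  ring

lemma exists_neg_deriv_deriv_logCutoff_add_le (T : ℝ) {σ : ℝ} (hσ : 0 ≤ σ) :
    ∃ K : ℝ, ∀ ε ∈ Icc (0 : ℝ) 1, ∀ t,
      -(deriv (deriv (logCutoff T ε)) t + σ * deriv (logCutoff T ε) t) ≤
        (Icc (T - 1) T).indicator (fun _ => K) t := by
  have hη₁ : ContDiff ℝ 1 (Function.uncurry fun ε => deriv (logCutoff T ε)) :=
    contDiff_uncurry_deriv (contDiff_uncurry_logCutoff T)
  have hη₂ : ContDiff ℝ 0 (Function.uncurry fun ε => deriv (deriv (logCutoff T ε))) :=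
    contDiff_uncurry_deriv hη₁
  have hcont : Continuous fun p : ℝ × ℝ =>
      deriv (deriv (logCutoff T p.1)) p.2 + σ * deriv (logCutoff T p.1) p.2 :=
    hη₂.continuous.add (continuous_const.mul hη₁.continuous)
  obtain ⟨K, hK⟩ := (isCompact_Icc.prod isCompact_Icc).exists_bound_of_continuousOn
    (s := Icc (0 : ℝ) 1 ×ˢ Icc (T - 1) T) hcont.continuousOn
  refine ⟨K, fun ε hε t => ?_⟩
  rcases lt_or_ge t (T - 1) with ht | ht
  · rw [indicator_of_notMem fun h => ht.not_ge h.1, deriv_deriv_logCutoff_of_lt ht,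
      deriv_logCutoff_of_lt ht, neg_nonpos]
    have := hε.1
    positivity
  rcases lt_or_ge T t with ht' | ht'
  · have hzero : logCutoff T ε =ᶠ[𝓝 t] fun _ => 0 := by
      filter_upwards [Ioi_mem_nhds ht'] with s hs using logCutoff_of_ge (mem_Ioi.1 hs).le
    rw [indicator_of_notMem fun h => ht'.not_ge h.2, hzero.deriv.deriv_eq, hzero.deriv_eq]
    simp
  · have htmem : t ∈ Icc (T - 1) T := ⟨ht, ht'⟩
    rw [indicator_of_mem htmem]
    exact (neg_le_abs _).trans (hK (ε, t) ⟨hε, htmem⟩)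

end LogCutoff

section CutoffPow

variable {F : Type*} [NormedAddCommGroup F] {T β ε : ℝ}

/-- The test function `|x|^β η_ε(log |x|)`. The power is written as an exponential of `log |x|`, so
that the whole function has the form `P (log |x|)`. -/
def cutoffPow (T β ε : ℝ) (x : F) : ℝ :=
  Real.exp (β * Real.log ‖x‖) * logCutoff T ε (Real.log ‖x‖)

lemma cutoffPow_nonneg (T β ε : ℝ) (x : F) : 0 ≤ cutoffPow T β ε x :=
  mul_nonneg (Real.exp_nonneg _) (logCutoff_nonneg _ _ _)

lemma exp_mul_logCutoff_zero (hT : T ≤ 0) : Real.exp (β * 0) * logCutoff T ε 0 = 0 := by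
  rw [logCutoff_of_ge hT, mul_zero]

lemma exp_mul_logCutoff_of_notMem_Icc (hε : 0 < ε) (t : ℝ) (ht : t ∉ Icc (-1 / ε) T) :
    Real.exp (β * t) * logCutoff T ε t = 0 := by
  rw [logCutoff_of_notMem_Icc hε ht, mul_zero]

lemma tsupport_cutoffPow_subset (hT : T ≤ 0) (hε : 0 < ε) :
    tsupport (cutoffPow (F := F) T β ε) ⊆ norm ⁻¹' Icc (Real.exp (-1 / ε)) (Real.exp T) :=
  tsupport_comp_log_norm_subset (P := fun t => Real.exp (β * t) * logCutoff T ε t)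
    (exp_mul_logCutoff_zero hT) (exp_mul_logCutoff_of_notMem_Icc hε)

lemma hasCompactSupport_cutoffPow [ProperSpace F] (hT : T ≤ 0) (hε : 0 < ε) :
    HasCompactSupport (cutoffPow (F := F) T β ε) :=
  hasCompactSupport_comp_log_norm (P := fun t => Real.exp (β * t) * logCutoff T ε t)
    (exp_mul_logCutoff_zero hT) (exp_mul_logCutoff_of_notMem_Icc hε)

lemma contDiff_cutoffPow [InnerProductSpace ℝ F] (hT : T ≤ 0) (hε : 0 < ε) :
    ContDiff ℝ 2 (cutoffPow (F := F) T β ε) :=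
  contDiff_comp_log_norm (n := 2) (P := fun t => Real.exp (β * t) * logCutoff T ε t)
    ((Real.contDiff_exp.comp (contDiff_const.mul contDiff_id)).mul (contDiff_logCutoff T ε))
    (exp_mul_logCutoff_zero hT) (exp_mul_logCutoff_of_notMem_Icc hε)

lemma continuous_cutoffPow_param (T β : ℝ) (x : F) : Continuous fun ε => cutoffPow T β ε x :=
  continuous_const.mul
    ((contDiff_uncurry_logCutoff T).continuous.comp (Continuous.prodMk_left (Real.log ‖x‖)))

lemma cutoffPow_zero_of_norm_le {x : F} (hx : x ≠ 0) (hxT : ‖x‖ ≤ Real.exp (T - 1)) :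
    cutoffPow T β 0 x = ‖x‖ ^ β := by
  have hpos : 0 < ‖x‖ := norm_pos_iff.2 hx
  rw [cutoffPow, logCutoff_of_le ((Real.log_le_iff_le_exp hpos).2 hxT), Real.rpow_def_of_pos hpos,
    mul_comm β]
  simp

end CutoffPow

section Supersolutions

variable {N : ℕ} {μ₁ μ₂ T : ℝ} {U : Set (E N)} {u : E N → ℝ}

lemma exists_ckn_cutoffPow_le (hμ : 0 ≤ (2 - N + μ₁) ^ 2 + 4 * μ₂) (T : ℝ) :
    ∃ K : ℝ, ∀ ε ∈ Icc (0 : ℝ) 1, ∀ x : E N, x ≠ 0 →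
      ckn N μ₁ μ₂ (cutoffPow T (tauPlus N μ₁ μ₂) ε) x ≤
        (norm ⁻¹' Icc (Real.exp (T - 1)) (Real.exp T)).indicator
          (fun y => Real.exp (tauPlus N μ₁ μ₂ * Real.log ‖y‖) / ‖y‖ ^ 2 * K) x := by
  obtain ⟨K, hK⟩ := exists_neg_deriv_deriv_logCutoff_add_le T
    (sub_nonneg.2 (tauMinus_le_tauPlus N μ₁ μ₂))
  refine ⟨K, fun ε hε x hx => ?_⟩
  have hmem : x ∈ norm ⁻¹' Icc (Real.exp (T - 1)) (Real.exp T) ↔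
      Real.log ‖x‖ ∈ Icc (T - 1) T := by
    have hpos : 0 < ‖x‖ := norm_pos_iff.2 hx
    simp only [mem_preimage, mem_Icc, Real.le_log_iff_exp_le hpos, Real.log_le_iff_le_exp hpos]
  calc ckn N μ₁ μ₂ (cutoffPow T (tauPlus N μ₁ μ₂) ε) x
      = Real.exp (tauPlus N μ₁ μ₂ * Real.log ‖x‖) / ‖x‖ ^ 2 *
          -(deriv (deriv (logCutoff T ε)) (Real.log ‖x‖) +
            (tauPlus N μ₁ μ₂ - tauMinus N μ₁ μ₂) * deriv (logCutoff T ε) (Real.log ‖x‖)) :=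
        ckn_exp_mul_comp_log_norm hμ (contDiff_logCutoff T ε) hx
    _ ≤ Real.exp (tauPlus N μ₁ μ₂ * Real.log ‖x‖) / ‖x‖ ^ 2 *
          (Icc (T - 1) T).indicator (fun _ => K) (Real.log ‖x‖) := by
        gcongr
        exact hK ε hε _
    _ = _ := by
        by_cases h : Real.log ‖x‖ ∈ Icc (T - 1) T
        · rw [indicator_of_mem h, indicator_of_mem (hmem.2 h)]
        · rw [indicator_of_notMem h, indicator_of_notMem (mt hmem.1 h), mul_zero]

lemma exists_closedBall_exp_sdiff_subset (hU : U ∈ 𝓝[≠] 0) :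
    ∃ T ≤ 0, closedBall 0 (Real.exp T) \ {0} ⊆ U := by
  obtain ⟨ρ, hρ, hρU⟩ := (nhdsWithin_hasBasis nhds_basis_closedBall _).mem_iff.1 hU
  refine ⟨min 0 (Real.log ρ), min_le_left _ _, fun x hx => hρU ⟨?_, hx.2⟩⟩
  exact closedBall_subset_closedBall ((Real.le_log_iff_exp_le hρ).1 (min_le_right _ _)) hx.1

lemma preimage_norm_Icc_exp_subset (hTU : closedBall 0 (Real.exp T) \ {0} ⊆ U) (a : ℝ) :
    norm ⁻¹' Icc (Real.exp a) (Real.exp T) ⊆ U := by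
  refine fun x hx => hTU ⟨mem_closedBall_zero_iff.2 hx.2, ?_⟩
  rintro rfl
  exact (Real.exp_pos a).not_ge (by simpa using hx.1)

lemma integrable_indicator_annulus_mul (h0 : (0 : E N) ∉ U)
    (hTU : closedBall 0 (Real.exp T) \ {0} ⊆ U) (hu : ContinuousOn u U) (a β K : ℝ) :
    Integrable (fun x => (norm ⁻¹' Icc (Real.exp a) (Real.exp T)).indicator
      (fun y => Real.exp (β * Real.log ‖y‖) / ‖y‖ ^ 2 * K) x * u x) := by
  set A : Set (E N) := norm ⁻¹' Icc (Real.exp a) (Real.exp T)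
  have hAU : A ⊆ U := preimage_norm_Icc_exp_subset hTU a
  have hA : IsCompact A := (isCompact_closedBall (0 : E N) (Real.exp T)).of_isClosed_subset
    (isClosed_Icc.preimage continuous_norm) fun x hx => mem_closedBall_zero_iff.2 hx.2
  have hne (x : E N) (hx : x ∈ A) : ‖x‖ ≠ 0 :=
    norm_ne_zero_iff.2 (ne_of_mem_of_not_mem (hAU hx) h0)
  have hlog : ContinuousOn (fun y : E N => Real.log ‖y‖) A := continuous_norm.continuousOn.log hne
  have hcont : ContinuousOn
      (fun y => Real.exp (β * Real.log ‖y‖) / ‖y‖ ^ 2 * K * u y) A :=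
    (((Real.continuous_exp.comp_continuousOn (continuousOn_const.mul hlog)).div
      (continuous_norm.pow 2).continuousOn fun x hx => pow_ne_zero 2 (hne x hx)).mul
      continuousOn_const).mul (hu.mono hAU)
  simpa only [← indicator_mul_left] using
    (hcont.integrableOn_compact hA).integrable_indicator hA.measurableSet

lemma exists_integral_cutoffPow_mul_ckn_le (hμ : 0 ≤ (2 - N + μ₁) ^ 2 + 4 * μ₂) (hT : T ≤ 0)
    (hU : IsOpen U) (h0 : (0 : E N) ∉ U) (hTU : closedBall 0 (Real.exp T) \ {0} ⊆ U)
    (hu : ContDiffOn ℝ 2 u U) (hu0 : ∀ x ∈ U, 0 ≤ u x) :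
    ∃ C : ℝ, ∀ ε ∈ Ioc (0 : ℝ) 1,
      ∫ x, cutoffPow T (tauPlus N μ₁ μ₂ - μ₁) ε x * ckn N μ₁ μ₂ u x ≤ C := by
  have hμ' : 0 ≤ (2 - N + -μ₁) ^ 2 + 4 * (μ₂ - (N - 2) * μ₁) := by linarith
  obtain ⟨K, hK⟩ := exists_ckn_cutoffPow_le hμ' T
  rw [tauPlus_adjoint] at hK
  set β := tauPlus N μ₁ μ₂ - μ₁
  refine ⟨∫ x, (norm ⁻¹' Icc (Real.exp (T - 1)) (Real.exp T)).indicator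
    (fun y => Real.exp (β * Real.log ‖y‖) / ‖y‖ ^ 2 * K) x * u x, fun ε hε => ?_⟩
  have hφ : ContDiff ℝ 2 (cutoffPow (F := E N) T β ε) := contDiff_cutoffPow hT hε.1
  have hc : HasCompactSupport (cutoffPow (F := E N) T β ε) := hasCompactSupport_cutoffPow hT hε.1
  have hsub : tsupport (cutoffPow (F := E N) T β ε) ⊆ U :=
    (tsupport_cutoffPow_subset hT hε.1).trans (preimage_norm_Icc_exp_subset hTU _)
  rw [integral_mul_ckn_eq_integral_ckn_mul hU h0 hφ hc hsub hu]
  refine integral_mono (integrable_ckn_mul hU h0 hφ hc hsub hu.continuousOn)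
    (integrable_indicator_annulus_mul h0 hTU hu.continuousOn (T - 1) β K) fun x => ?_
  by_cases hxU : x ∈ U
  · exact mul_le_mul_of_nonneg_right
      (hK ε (Ioc_subset_Icc_self hε) x (ne_of_mem_of_not_mem hxU h0)) (hu0 x hxU)
  · have hckn : ckn N (-μ₁) (μ₂ - (N - 2) * μ₁) (cutoffPow T β ε) x = 0 :=
      image_eq_zero_of_notMem_tsupport fun h => hxU (hsub (tsupport_ckn_subset h))
    have hx : x ∉ norm ⁻¹' Icc (Real.exp (T - 1)) (Real.exp T) :=
      fun h => hxU (preimage_norm_Icc_exp_subset hTU _ h)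
    simp only [hckn, indicator_of_notMem hx, zero_mul, le_refl]

lemma integrable_of_tendsto_of_integral_le {X : Type*} [MeasurableSpace X] {μ : Measure X}
    {G : ℕ → X → ℝ} {g : X → ℝ} {C : ℝ} (hG : ∀ n, Integrable (G n) μ) (hG0 : ∀ n x, 0 ≤ G n x)
    (hC : ∀ n, ∫ x, G n x ∂μ ≤ C) (hlim : ∀ x, Tendsto (fun n => G n x) atTop (𝓝 (g x))) :
    Integrable g μ := by
  refine ⟨aestronglyMeasurable_of_tendsto_ae atTop (fun n => (hG n).1) (ae_of_all _ hlim), ?_⟩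
  have hnorm (n : ℕ) : ∫⁻ x, ‖G n x‖ₑ ∂μ ≤ ENNReal.ofReal C := by
    simp only [Real.enorm_of_nonneg (hG0 n _)]
    rw [← ofReal_integral_eq_lintegral_ofReal (hG n) (ae_of_all _ (hG0 n))]
    exact ENNReal.ofReal_le_ofReal (hC n)
  calc ∫⁻ x, ‖g x‖ₑ ∂μ = ∫⁻ x, liminf (fun n => ‖G n x‖ₑ) atTop ∂μ :=
        lintegral_congr fun x => (hlim x).enorm.liminf_eq.symm
    _ ≤ liminf (fun n => ∫⁻ x, ‖G n x‖ₑ ∂μ) atTop :=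
        lintegral_liminf_le' fun n => (hG n).1.enorm
    _ ≤ ENNReal.ofReal C :=
        liminf_le_of_le (h := fun b hb => hb.exists.elim fun n hn => hn.trans (hnorm n))
    _ < ⊤ := ENNReal.ofReal_lt_top

theorem integrableAtFilter_ckn_mul_rpow (hμ : 0 ≤ (2 - N + μ₁) ^ 2 + 4 * μ₂) (hU : IsOpen U)
    (h0 : (0 : E N) ∉ U) (hU0 : U ∈ 𝓝[≠] 0) (hu : ContDiffOn ℝ 2 u U) (hu0 : ∀ x ∈ U, 0 ≤ u x)
    (hLu : ∀ x ∈ U, 0 ≤ ckn N μ₁ μ₂ u x) :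
    IntegrableAtFilter (fun x => ckn N μ₁ μ₂ u x * ‖x‖ ^ (tauPlus N μ₁ μ₂ - μ₁)) (𝓝[≠] 0) := by
  obtain ⟨T, hT, hTU⟩ := exists_closedBall_exp_sdiff_subset hU0
  obtain ⟨C, hC⟩ := exists_integral_cutoffPow_mul_ckn_le hμ hT hU h0 hTU hu hu0
  set β := tauPlus N μ₁ μ₂ - μ₁
  have hε (n : ℕ) : 1 / ((n : ℝ) + 1) ∈ Ioc (0 : ℝ) 1 :=
    ⟨Nat.one_div_pos_of_nat, by simpa using Nat.one_div_le_one_div (α := ℝ) n.zero_le⟩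
  have hsub (n : ℕ) : tsupport (cutoffPow (F := E N) T β (1 / (n + 1))) ⊆ U :=
    (tsupport_cutoffPow_subset hT (hε n).1).trans (preimage_norm_Icc_exp_subset hTU _)
  have hlimit : Integrable (fun x => cutoffPow T β 0 x * ckn N μ₁ μ₂ u x) := by
    refine integrable_of_tendsto_of_integral_le
      (G := fun n x => cutoffPow T β (1 / (n + 1)) x * ckn N μ₁ μ₂ u x) (fun n => ?_)
      (fun n x => ?_) (fun n => hC _ (hε n)) (fun x => ?_)
    · exact integrable_mul_of_tsupport_subset hU (contDiff_cutoffPow hT (hε n).1).continuous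
        (hasCompactSupport_cutoffPow hT (hε n).1) (hsub n) (continuousOn_ckn hU h0 hu)
    · by_cases hx : x ∈ U
      · exact mul_nonneg (cutoffPow_nonneg _ _ _ _) (hLu x hx)
      · rw [image_eq_zero_of_notMem_tsupport fun h => hx (hsub n h), zero_mul]
    · exact ((continuous_cutoffPow_param T β x).continuousAt.tendsto.comp
        tendsto_one_div_add_atTop_nhds_zero_nat).mul_const _
  refine ⟨_, inter_mem_nhdsWithin _ (closedBall_mem_nhds 0 (Real.exp_pos (T - 1))), ?_⟩
  refine hlimit.integrableOn.congr_fun (fun x hx => ?_)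
    ((measurableSet_singleton 0).compl.inter measurableSet_closedBall)
  dsimp only
  rw [cutoffPow_zero_of_norm_le hx.1 (mem_closedBall_zero_iff.1 hx.2), mul_comm]

end Supersolutions

section BlowUp

variable {X : Type*} [MetricSpace X] [MeasurableSpace X] {μ : Measure X} {Ω : Set X} {p : X}
  {f g : X → ℝ}

lemma integrableOn_diff_ball_of_tendsto_setIntegral_atTop
    (h : Tendsto (fun r => ∫ x in Ω \ ball p r, f x ∂μ) (𝓝[>] (0 : ℝ)) atTop) {r : ℝ}
    (hr : 0 < r) : IntegrableOn f (Ω \ ball p r) μ := by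
  obtain ⟨s, hspos, -, hsr⟩ := ((h.eventually_gt_atTop 0).and (Ioo_mem_nhdsGT hr)).exists
  -- A positive integral is not the junk value `0` that a non-integrable function would have.
  have hs : IntegrableOn f (Ω \ ball p s) μ := Integrable.of_integral_ne_zero hspos.ne'
  exact hs.mono_set (sdiff_subset_sdiff_right (ball_subset_ball hsr.le))

lemma setIntegral_diff_ball_le [OpensMeasurableSpace X] (hΩ : MeasurableSet Ω)
    (hf : ∀ x ∈ Ω \ {p}, 0 ≤ f x) (hfg : ∀ x ∈ Ω \ {p}, f x ≤ g x) {r ρ : ℝ} (hr : 0 < r)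
    (hrρ : r ≤ ρ) (hfr : IntegrableOn f (Ω \ ball p r) μ)
    (hg : IntegrableOn g (Ω ∩ (ball p ρ \ {p})) μ) :
    ∫ x in Ω \ ball p r, f x ∂μ ≤
      ∫ x in Ω \ ball p ρ, f x ∂μ + ∫ x in Ω ∩ (ball p ρ \ {p}), g x ∂μ := by
  set V : Set X := Ω ∩ (ball p ρ \ {p})
  have hV : MeasurableSet V := hΩ.inter (measurableSet_ball.diff (measurableSet_singleton p))
  have hVr : MeasurableSet (V \ ball p r) := hV.diff measurableSet_ball
  have hVΩ : V ⊆ Ω \ {p} := fun x hx => ⟨hx.1, hx.2.2⟩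
  have hsplit : Ω \ ball p r = (Ω \ ball p ρ) ∪ (V \ ball p r) := by
    ext x
    have hsub : x ∈ ball p r → x ∈ ball p ρ := fun hx => ball_subset_ball hrρ hx
    have hne : x ∉ ball p r → x ≠ p := by
      rintro hx rfl
      exact hx (mem_ball_self hr)
    simp only [V, mem_union, Set.mem_sdiff, mem_inter_iff, mem_singleton_iff]
    tauto
  have hdisj : Disjoint (Ω \ ball p ρ) (V \ ball p r) :=
    disjoint_left.2 fun x hx hx' => hx.2 hx'.1.2.1
  rw [hsplit] at hfr ⊢
  rw [setIntegral_union hdisj hVr (hfr.mono_set subset_union_left)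
    (hfr.mono_set subset_union_right)]
  gcongr
  calc ∫ x in V \ ball p r, f x ∂μ ≤ ∫ x in V \ ball p r, g x ∂μ :=
        setIntegral_mono_on (hfr.mono_set subset_union_right) (hg.mono_set sdiff_subset) hVr
          fun x hx => hfg x (hVΩ hx.1)
    _ ≤ ∫ x in V, g x ∂μ :=
        setIntegral_mono_set hg
          (ae_restrict_of_forall_mem hV fun x hx => (hf x (hVΩ hx)).trans (hfg x (hVΩ hx)))
          sdiff_subset.eventuallyLE

lemma not_tendsto_setIntegral_diff_ball_atTop [OpensMeasurableSpace X] (hΩ : MeasurableSet Ω)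
    (hf : ∀ x ∈ Ω \ {p}, 0 ≤ f x) (hfg : ∀ x ∈ Ω \ {p}, f x ≤ g x)
    (hg : IntegrableAtFilter g (𝓝[≠] p) μ) :
    ¬ Tendsto (fun r => ∫ x in Ω \ ball p r, f x ∂μ) (𝓝[>] (0 : ℝ)) atTop := by
  intro htop
  obtain ⟨s, hs, hgs⟩ := hg
  obtain ⟨ρ, hρ, hρs⟩ := (nhdsWithin_hasBasis nhds_basis_ball _).mem_iff.1 hs
  have hgρ : IntegrableOn g (Ω ∩ (ball p ρ \ {p})) μ := hgs.mono_set fun x hx => hρs hx.2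
  obtain ⟨r, hrgt, hr⟩ := ((htop.eventually_gt_atTop _).and (Ioo_mem_nhdsGT hρ)).exists
  have hfr : IntegrableOn f (Ω \ ball p r) μ :=
    integrableOn_diff_ball_of_tendsto_setIntegral_atTop htop hr.1
  exact (setIntegral_diff_ball_le hΩ hf hfg hr.1 hr.2.le hfr hgρ).not_gt hrgt

end BlowUp

theorem stmt4_general (N : ℕ) (μ₁ μ₂ : ℝ) (hμ₂ : -((N : ℝ) - 2 - μ₁) ^ 2 / 4 ≤ μ₂)
    (Ω : Set (E N)) (hΩo : IsOpen Ω) (h0Ω : (0 : E N) ∈ Ω)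
    (f : E N → ℝ) (hfpos : ∀ x ∈ Ω \ {0}, 0 ≤ f x)
    (hfblow : Tendsto
      (fun r : ℝ => ∫ x in Ω \ ball (0 : E N) r, f x * ‖x‖ ^ (tauPlus N μ₁ μ₂ - μ₁))
      (𝓝[>] (0 : ℝ)) atTop) :
    ¬ ∃ u : E N → ℝ, ContDiffOn ℝ 2 u (Ω \ {0}) ∧
        (∀ x ∈ Ω \ {0}, 0 ≤ u x) ∧ ∀ x ∈ Ω \ {0}, f x ≤ ckn N μ₁ μ₂ u x := by
  rintro ⟨u, hu, hu0, hfu⟩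
  have hμ : 0 ≤ (2 - N + μ₁) ^ 2 + 4 * μ₂ := by linarith
  have hint := integrableAtFilter_ckn_mul_rpow hμ (hΩo.sdiff isClosed_singleton)
    (notMem_sdiff_of_mem (mem_singleton 0)) (sdiff_mem_nhdsWithin_compl (hΩo.mem_nhds h0Ω) {0})
    hu hu0 fun x hx => (hfpos x hx).trans (hfu x hx)
  refine not_tendsto_setIntegral_diff_ball_atTop hΩo.measurableSet (fun x hx => ?_)
    (fun x hx => ?_) hint hfblow
  · exact mul_nonneg (hfpos x hx) (Real.rpow_nonneg (norm_nonneg x) _)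
  · exact mul_le_mul_of_nonneg_right (hfu x hx) (Real.rpow_nonneg (norm_nonneg x) _)

/-- nonexistence of nonnegative solutions of the Poisson problem
when the weighted integral of `f` near the origin blows up. -/
theorem stmt4 (N : ℕ) (hN : 2 ≤ N) (μ₁ μ₂ : ℝ)
    (hμ₂ : -((N : ℝ) - 2 - μ₁) ^ 2 / 4 ≤ μ₂)
    (Ω : Set (E N)) (hΩo : IsOpen Ω) (hΩc : IsConnected Ω)
    (hΩb : Bornology.IsBounded Ω) (h0Ω : (0 : E N) ∈ Ω)
    (γ : ℝ) (hγ : γ ∈ Set.Ioo (0 : ℝ) 1)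
    (f : E N → ℝ) (hfreg : LocHolderOn N γ f (closure Ω \ {0}))
    (hfpos : ∀ x ∈ closure Ω \ {0}, 0 ≤ f x)
    (hfblow : Filter.Tendsto
      (fun r : ℝ => ∫ x in Ω \ ball (0 : E N) r, f x * ‖x‖ ^ (tauPlus N μ₁ μ₂ - μ₁))
      (nhdsWithin (0 : ℝ) (Set.Ioi 0)) Filter.atTop) :
    ¬ ∃ u : E N → ℝ, ContDiffOn ℝ 2 u (Ω \ {0}) ∧
        (∀ x ∈ Ω \ {0}, 0 ≤ u x) ∧
        (∀ x ∈ Ω \ {0}, ckn N μ₁ μ₂ u x = f x) ∧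
        (∀ x ∈ frontier Ω, u x = 0) := by
  rintro ⟨u, hu, hu0, heq, -⟩
  exact stmt4_general N μ₁ μ₂ hμ₂ Ω hΩo h0Ω f
    (fun x hx => hfpos x (sdiff_subset_sdiff_left subset_closure hx)) hfblow
    ⟨u, hu, hu0, fun x hx => (heq x hx).ge⟩
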